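/- Let R be a commutative ring and let D = {x ∈ R | x² = 0} be its set of first-order infinitesimals. If R satisfies the Kock–Lawvere axiom — for every function g : D → R there exists a unique b ∈ R such that g(d) = g(0) + d·b for all d ∈ D — then (in classical logic) R is a subsingleton, i.e. any two elements of R are equal. This expresses the paper's Proposition 1, that the Kock–Lawvere axiom is incompatible with the law of excluded middle (for any nontrivial ring). -/

import Mathlib

/-- **Proposition 1 (Kock–Lawvere vs. excluded middle).**
Let `R` be a commutative ring and `D = {x ∈ R | x² = 0}` its set of first-order
infinitesimals.  If `R` satisfies the Kock–Lawvere axiom — every `g : D → R` is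
representable as `g d = g 0 + d * b` for a unique `b : R` — then, in classical
logic, `R` is a subsingleton: any two elements of `R` are equal. -/
theorem kock_lawvere_incompatible_with_LEM
    {R : Type*} [CommRing R]
    (KL : ∀ g : {x : R // x ^ 2 = 0} → R,
      ∃! b : R, ∀ d : {x : R // x ^ 2 = 0},
        g d = g ⟨0, by ring⟩ + d.val * b) :
    ∀ a b : R, a = b := by
  classical
  intro x y
  by_cases h : ∃ d : {x : R // x ^ 2 = 0}, d.val ≠ 0
  · obtain ⟨d, hd⟩ := h
    obtain ⟨b, hb, -⟩ := KL (fun d => if d.val = 0 then 0 else 1)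
    have h1 := hb d
    simp only [hd, if_true, if_false, zero_add] at h1
    have h2 : (1 : R) = 0 := by
      calc (1 : R) = 1 * 1 := by ring
        _ = (d.val * b) * (d.val * b) := by rw [← h1]
        _ = d.val ^ 2 * b ^ 2 := by ring
        _ = 0 := by rw [d.property, zero_mul]
    exact eq_of_zero_eq_one h2.symm x y
  · push Not at h
    refine (KL (fun _ => 0)).unique ?_ ?_ <;> intro d <;> simp [h d]
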